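/- Let G ≤ PL₊(I) be a chainless group, and let n − 1 be the number of G-orbits of the set of breakpoints of elements of G, assumed finite. Then G does not admit a tower of height n; consequently G is soluble with derived length at most n − 1. -/

import Mathlib

open Set

namespace PLPaper

/-- We model `PL₊(I)` inside the group of bijections of `ℝ` with *opposite*
composition, so that the group acts on `ℝ` on the right:
`x · (g * h) = (x · g) · h`. -/
abbrev PermR : Type := (Equiv.Perm ℝ)ᵐᵒᵖ

/-- The (right) action of `g` on the point `x`. -/
def ap (g : PermR) (x : ℝ) : ℝ := g.unop x

/-- `g` is affine on a neighbourhood of `x`. -/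
def IsLocallyAffineAt (g : PermR) (x : ℝ) : Prop :=
  ∃ m b : ℝ, ∀ᶠ y in nhds x, ap g y = m * y + b

/-- The breakpoints of `g`: points of `(0,1)` where `g` is not locally affine
(equivalently, for a PL map, where the derivative fails to exist). -/
def Breakpoints (g : PermR) : Set ℝ :=
  {x ∈ Ioo (0:ℝ) 1 | ¬ IsLocallyAffineAt g x}

/-- `g` is an orientation-preserving piecewise-linear homeomorphism of `[0,1]`
(extended by the identity to all of `ℝ`), with finitely many breakpoints. -/
def IsPL (g : PermR) : Prop :=
  StrictMono (ap g) ∧ (∀ x ∉ Ioo (0:ℝ) 1, ap g x = x) ∧ (Breakpoints g).Finite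

/-- The support of `g`. -/
def Supp (g : PermR) : Set ℝ := {x | ap g x ≠ x}

/-- `(a,b)` is an orbital of `g`, i.e. a connected component of `Supp g`. -/
def IsOrbital (g : PermR) (a b : ℝ) : Prop :=
  a < b ∧ Ioo a b ⊆ Supp g ∧ a ∉ Supp g ∧ b ∉ Supp g

/-- The support of a subgroup `G`. -/
def GSupp (G : Subgroup PermR) : Set ℝ := ⋃ g ∈ (G : Set PermR), Supp g

/-- `(a,b)` is an orbital of the group `G`, i.e. a connected component of its support. -/
def IsGroupOrbital (G : Subgroup PermR) (a b : ℝ) : Prop :=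
  a < b ∧ Ioo a b ⊆ GSupp G ∧ a ∉ GSupp G ∧ b ∉ GSupp G

/-- The pair `g, h` carries a transition chain: orbitals `(a,b)` of `g` and
`(c,d)` of `h` with `a < c < b < d`. -/
def ElemsTransitionChain (g h : PermR) : Prop :=
  ∃ a b c d : ℝ, IsOrbital g a b ∧ IsOrbital h c d ∧ a < c ∧ c < b ∧ b < d

/-- The pair `g, h` carries a one-sided overlap: orbitals `(a,b)` of `g` and
`(a,c)` of `h`, or `(a,b)` of `g` and `(c,b)` of `h`, where `a < c < b`. -/
def ElemsOneSidedOverlap (g h : PermR) : Prop :=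
  ∃ a b c : ℝ, a < c ∧ c < b ∧
    ((IsOrbital g a b ∧ IsOrbital h a c) ∨ (IsOrbital g a b ∧ IsOrbital h c b))

def AdmitsTransitionChain (G : Subgroup PermR) : Prop :=
  ∃ g ∈ G, ∃ h ∈ G, ElemsTransitionChain g h

def AdmitsOneSidedOverlap (G : Subgroup PermR) : Prop :=
  ∃ g ∈ G, ∃ h ∈ G, ElemsOneSidedOverlap g h

/-- `G` admits a bad overlap: orbitals `A` of `f ∈ G` and `B` of `g ∈ G` which
intersect, are distinct, and neither closure is contained in the other orbital. -/
def AdmitsBadOverlap (G : Subgroup PermR) : Prop :=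
  ∃ f ∈ G, ∃ g ∈ G, ∃ a b c d : ℝ, IsOrbital f a b ∧ IsOrbital g c d ∧
    (Ioo a b ∩ Ioo c d).Nonempty ∧ Ioo a b ≠ Ioo c d ∧
    ¬ Icc a b ⊆ Ioo c d ∧ ¬ Icc c d ⊆ Ioo a b

/-- A tower: a set of signed orbitals `((a,b), g)` with pairwise nested orbitals,
where equal orbitals force equal signatures. -/
def IsTower (T : Set ((ℝ × ℝ) × PermR)) : Prop :=
  (∀ p ∈ T, IsOrbital p.2 p.1.1 p.1.2) ∧
  (∀ p ∈ T, ∀ q ∈ T,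
      Ioo p.1.1 p.1.2 ⊆ Ioo q.1.1 q.1.2 ∨ Ioo q.1.1 q.1.2 ⊆ Ioo p.1.1 p.1.2) ∧
  (∀ p ∈ T, ∀ q ∈ T, p.1 = q.1 → p.2 = q.2)

/-- `G` admits the tower `T` if `T` is a tower all of whose signatures lie in `G`. -/
def AdmitsTower (G : Subgroup PermR) (T : Set ((ℝ × ℝ) × PermR)) : Prop :=
  IsTower T ∧ ∀ p ∈ T, p.2 ∈ G

def AdmitsInfiniteTower (G : Subgroup PermR) : Prop :=
  ∃ T : Set ((ℝ × ℝ) × PermR), AdmitsTower G T ∧ T.Infinite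

/-- The set of breakpoints of the elements of a set `S`. -/
def BreakSet (S : Set PermR) : Set ℝ := ⋃ g ∈ S, Breakpoints g

/-- The derived length of a group: the least `n` with `derivedSeries G n = ⊥`. -/
noncomputable def derivedLength (G : Type*) [Group G] : ℕ :=
  sInf {n : ℕ | derivedSeries G n = ⊥}

/-- The `G`-orbit of a point `x`. -/
def orbitOf (G : Subgroup PermR) (x : ℝ) : Set ℝ := {y | ∃ g ∈ G, ap g x = y}

lemma ap_mul (g h : PermR) (x : ℝ) : ap (g * h) x = ap h (ap g x) := rfl

lemma ap_one (x : ℝ) : ap 1 x = x := rfl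

lemma ap_inv_ap (g : PermR) (x : ℝ) : ap g⁻¹ (ap g x) = x := by
  rw [← ap_mul, mul_inv_cancel, ap_one]

lemma ap_ap_inv (g : PermR) (x : ℝ) : ap g (ap g⁻¹ x) = x := by
  rw [← ap_mul, inv_mul_cancel, ap_one]

lemma ap_ext {g : PermR} (h : ∀ x, ap g x = x) : g = 1 := by
  apply MulOpposite.unop_injective
  ext x
  exact h x

lemma notMem_supp {g : PermR} {x : ℝ} : x ∉ Supp g ↔ ap g x = x := by
  simp [Supp]

lemma IsPL.cont {g : PermR} (hg : IsPL g) : Continuous (ap g) :=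
  hg.1.monotone.continuous_of_surjective g.unop.surjective

lemma IsOrbital.left {g : PermR} {a b : ℝ} (h : IsOrbital g a b) : ap g a = a :=
  notMem_supp.1 h.2.2.1

lemma IsOrbital.right {g : PermR} {a b : ℝ} (h : IsOrbital g a b) : ap g b = b :=
  notMem_supp.1 h.2.2.2

lemma IsOrbital.mov {g : PermR} {a b x : ℝ} (h : IsOrbital g a b) (h1 : a < x) (h2 : x < b) :
    ap g x ≠ x := h.2.1 ⟨h1, h2⟩

lemma IsOrbital.inv {g : PermR} {a b : ℝ} (h : IsOrbital g a b) : IsOrbital g⁻¹ a b := by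
  have key : ∀ x, ap g⁻¹ x = x ↔ ap g x = x := by
    intro x
    constructor
    · intro hx
      have := ap_ap_inv g x
      rwa [hx] at this
    · intro hx
      have := ap_inv_ap g x
      rwa [hx] at this
  refine ⟨h.1, ?_, ?_, ?_⟩
  · intro x hx hx2
    exact h.2.1 hx ((key x).1 hx2)
  · rw [notMem_supp, key]; exact h.left
  · rw [notMem_supp, key]; exact h.right

lemma IsOrbital.conj {f h : PermR} {a b : ℝ} (hf : IsOrbital f a b) (hm : StrictMono (ap h)) :
    IsOrbital (h⁻¹ * f * h) (ap h a) (ap h b) := by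
  refine ⟨hm hf.1, ?_, ?_, ?_⟩
  · intro x hx hx2
    have hx3 : ap h (ap h⁻¹ x) = x := ap_ap_inv h x
    have h1 : a < ap h⁻¹ x := by rw [← hm.lt_iff_lt, hx3]; exact hx.1
    have h2 : ap h⁻¹ x < b := by rw [← hm.lt_iff_lt, hx3]; exact hx.2
    apply hf.mov h1 h2
    apply hm.injective
    rw [hx3]
    exact hx2
  · rw [notMem_supp, ap_mul, ap_mul, ap_inv_ap, hf.left]
  · rw [notMem_supp, ap_mul, ap_mul, ap_inv_ap, hf.right]

lemma IsPL.mem_Ioo {g : PermR} (hg : IsPL g) {x : ℝ} (hx : ap g x ≠ x) : x ∈ Ioo (0:ℝ) 1 := by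
  by_contra h
  exact hx (hg.2.1 x h)

lemma IsPL.orbital {g : PermR} (hg : IsPL g) {x : ℝ} (hx : ap g x ≠ x) :
    ∃ a b, IsOrbital g a b ∧ a < x ∧ x < b := by
  have hx01 := hg.mem_Ioo hx
  have hF : IsClosed {y | ap g y = y} := isClosed_eq hg.cont continuous_id
  have h0 : ap g 0 = 0 := hg.2.1 0 (by simp)
  have h1 : ap g 1 = 1 := hg.2.1 1 (by simp)
  have nA : ({y | ap g y = y} ∩ Iic x).Nonempty := ⟨0, h0, hx01.1.le⟩
  have nB : ({y | ap g y = y} ∩ Ici x).Nonempty := ⟨1, h1, hx01.2.le⟩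
  have bA : BddAbove ({y | ap g y = y} ∩ Iic x) := ⟨x, fun y hy => hy.2⟩
  have bB : BddBelow ({y | ap g y = y} ∩ Ici x) := ⟨x, fun y hy => hy.2⟩
  have mA := (hF.inter isClosed_Iic).csSup_mem nA bA
  have mB := (hF.inter isClosed_Ici).csInf_mem nB bB
  set a := sSup ({y | ap g y = y} ∩ Iic x) with ha
  set b := sInf ({y | ap g y = y} ∩ Ici x) with hb
  have hax : a < x := lt_of_le_of_ne mA.2 (fun h => hx (by have := mA.1; rwa [h] at this))
  have hxb : x < b := lt_of_le_of_ne mB.2 (fun h => hx (by have := mB.1; rwa [← h] at this))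
  refine ⟨a, b, ⟨hax.trans hxb, ?_, notMem_supp.2 mA.1, notMem_supp.2 mB.1⟩, hax, hxb⟩
  intro y hy hy2
  rcases le_total y x with h | h
  · exact absurd (le_csSup bA ⟨hy2, h⟩) (not_le.2 hy.1)
  · exact absurd (csInf_le bB ⟨hy2, h⟩) (not_le.2 hy.2)

/-- locally affine on an open interval implies affine -/
lemma affine_of_local {g : PermR} {a b : ℝ} (h : ∀ x ∈ Ioo a b, IsLocallyAffineAt g x) :
    ∃ m k : ℝ, ∀ x ∈ Ioo a b, ap g x = m * x + k := by
  by_cases hab : a < b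
  swap
  · exact ⟨0, 0, fun x hx => absurd (hx.1.trans hx.2) hab⟩
  obtain ⟨z, hz⟩ := nonempty_Ioo.2 hab
  have hlin : ∀ m k y : ℝ, HasDerivAt (fun y : ℝ => m * y + k) m y := by
    intro m k y
    simpa using ((hasDerivAt_id y).const_mul m).add_const k
  have key : ∀ x ∈ Ioo a b, ∃ m, (∀ᶠ y in nhds x, HasDerivAt (ap g) m y) := by
    intro x hx
    obtain ⟨m, k, hmk⟩ := h x hx
    refine ⟨m, ?_⟩
    filter_upwards [eventually_eventually_nhds.2 hmk] with y hy
    exact (hlin m k y).congr_of_eventuallyEq hy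
  have hd2 : ∀ x ∈ Ioo a b, HasDerivAt (deriv (ap g)) 0 x := by
    intro x hx
    obtain ⟨m, hm⟩ := key x hx
    apply (hasDerivAt_const x m).congr_of_eventuallyEq
    filter_upwards [hm] with y hy
    exact hy.deriv
  have hconst : ∀ x ∈ Ioo a b, deriv (ap g) x = deriv (ap g) z := by
    intro x hx
    exact isOpen_Ioo.is_const_of_deriv_eq_zero isPreconnected_Ioo
      (fun y hy => (hd2 y hy).differentiableAt.differentiableWithinAt)
      (fun y hy => (hd2 y hy).deriv) hx hz
  set m := deriv (ap g) z with hm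
  have hd : ∀ x ∈ Ioo a b, HasDerivAt (fun y => ap g y - m * y) 0 x := by
    intro x hx
    obtain ⟨m', hm'⟩ := key x hx
    have h1 := hm'.self_of_nhds
    have h2 : m' = m := by rw [← hconst x hx, h1.deriv]
    rw [h2] at h1
    have h3 : HasDerivAt (fun y => ap g y - m * y) (m - m * 1) x :=
      h1.sub ((hasDerivAt_id x).const_mul m)
    rwa [mul_one, sub_self] at h3
  refine ⟨m, ap g z - m * z, fun x hx => ?_⟩
  have := isOpen_Ioo.is_const_of_deriv_eq_zero isPreconnected_Ioo
      (fun y hy => (hd y hy).differentiableAt.differentiableWithinAt)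
      (fun y hy => (hd y hy).deriv) hx hz
  linarith

lemma not_break {g : PermR} (hg : IsPL g) {x : ℝ} (h0 : x ≠ 0) (h1 : x ≠ 1)
    (hx : x ∉ Breakpoints g) : IsLocallyAffineAt g x := by
  by_cases h : x ∈ Ioo (0:ℝ) 1
  · by_contra h2
    exact hx ⟨h, h2⟩
  · refine ⟨1, 0, ?_⟩
    have h3 : x ∈ (Icc (0:ℝ) 1)ᶜ := by
      intro h4
      exact h ⟨lt_of_le_of_ne h4.1 (Ne.symm h0), lt_of_le_of_ne h4.2 h1⟩
    filter_upwards [isClosed_Icc.isOpen_compl.mem_nhds h3] with y hy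
    rw [hg.2.1 y (fun h5 => hy ⟨h5.1.le, h5.2.le⟩)]
    ring

lemma bad_finite {g : PermR} (hg : IsPL g) : (Breakpoints g ∪ {0, 1}).Finite :=
  hg.2.2.union (by simp)

/-- the right germ at a fixed point -/
lemma IsPL.rgerm {g : PermR} (hg : IsPL g) {a : ℝ} (ha : ap g a = a) :
    ∃ m > 0, ∃ e > a, ∀ y ∈ Ioo a e, ap g y = a + m * (y - a) := by
  have hfin := (bad_finite hg).subset (sdiff_subset (t := {a}))
  have hev : ∀ᶠ y in nhds a, y ∉ (Breakpoints g ∪ {0, 1}) \ {a} :=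
    hfin.isClosed.isOpen_compl.mem_nhds (by simp)
  obtain ⟨ε, hε, hball⟩ := Metric.eventually_nhds_iff.1 hev
  have hloc : ∀ x ∈ Ioo a (a + ε), IsLocallyAffineAt g x := by
    intro x hx
    have h1 := @hball x (by rw [Real.dist_eq, abs_lt]; constructor <;> linarith [hx.1, hx.2])
    simp only [mem_sdiff, mem_union, mem_insert_iff, mem_singleton_iff, not_and, not_not] at h1
    have hxa : x ≠ a := hx.1.ne'
    exact not_break hg (fun h => hxa (h1 (by tauto))) (fun h => hxa (h1 (by tauto)))
      (fun h => hxa (h1 (by tauto)))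
  obtain ⟨m, k, hmk⟩ := affine_of_local hloc
  have hk : m * a + k = a := by
    have t1 : Filter.Tendsto (ap g) (nhdsWithin a (Ioi a)) (nhds a) := by
      have := (hg.cont.tendsto a).mono_left (nhdsWithin_le_nhds (s := Ioi a))
      rwa [ha] at this
    have t2 : Filter.Tendsto (ap g) (nhdsWithin a (Ioi a)) (nhds (m * a + k)) := by
      have hc : Continuous (fun y : ℝ => m * y + k) := by fun_prop
      have := (hc.tendsto a).mono_left (nhdsWithin_le_nhds (s := Ioi a))
      refine this.congr' ?_
      filter_upwards [Ioo_mem_nhdsGT (show a < a + ε by linarith)] with y hy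
      exact (hmk y hy).symm
    exact tendsto_nhds_unique t2 t1
  refine ⟨m, ?_, a + ε, by linarith, fun y hy => by rw [hmk y hy]; linarith⟩
  have h1 := hmk (a + ε / 2) ⟨by linarith, by linarith⟩
  have h2 := hg.1 (show a < a + ε / 2 by linarith)
  rw [ha, h1] at h2
  have h3 : 0 < m * ε := by linarith
  exact pos_of_mul_pos_left h3 hε.le

/-- the left germ at a fixed point -/
lemma IsPL.lgerm {g : PermR} (hg : IsPL g) {a : ℝ} (ha : ap g a = a) :
    ∃ m > 0, ∃ e < a, ∀ y ∈ Ioo e a, ap g y = a + m * (y - a) := by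
  have hfin := (bad_finite hg).subset (sdiff_subset (t := {a}))
  have hev : ∀ᶠ y in nhds a, y ∉ (Breakpoints g ∪ {0, 1}) \ {a} :=
    hfin.isClosed.isOpen_compl.mem_nhds (by simp)
  obtain ⟨ε, hε, hball⟩ := Metric.eventually_nhds_iff.1 hev
  have hloc : ∀ x ∈ Ioo (a - ε) a, IsLocallyAffineAt g x := by
    intro x hx
    have h1 := @hball x (by rw [Real.dist_eq, abs_lt]; constructor <;> linarith [hx.1, hx.2])
    simp only [mem_sdiff, mem_union, mem_insert_iff, mem_singleton_iff, not_and, not_not] at h1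
    have hxa : x ≠ a := hx.2.ne
    exact not_break hg (fun h => hxa (h1 (by tauto))) (fun h => hxa (h1 (by tauto)))
      (fun h => hxa (h1 (by tauto)))
  obtain ⟨m, k, hmk⟩ := affine_of_local hloc
  have hk : m * a + k = a := by
    have t1 : Filter.Tendsto (ap g) (nhdsWithin a (Iio a)) (nhds a) := by
      have := (hg.cont.tendsto a).mono_left (nhdsWithin_le_nhds (s := Iio a))
      rwa [ha] at this
    have t2 : Filter.Tendsto (ap g) (nhdsWithin a (Iio a)) (nhds (m * a + k)) := by
      have hc : Continuous (fun y : ℝ => m * y + k) := by fun_prop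
      have := (hc.tendsto a).mono_left (nhdsWithin_le_nhds (s := Iio a))
      refine this.congr' ?_
      filter_upwards [Ioo_mem_nhdsLT (show a - ε < a by linarith)] with y hy
      exact (hmk y hy).symm
    exact tendsto_nhds_unique t2 t1
  refine ⟨m, ?_, a - ε, by linarith, fun y hy => by rw [hmk y hy]; linarith⟩
  have h1 := hmk (a - ε / 2) ⟨by linarith, by linarith⟩
  have h2 := hg.1 (show a - ε / 2 < a by linarith)
  rw [ha, h1] at h2
  have h3 : 0 < m * ε := by linarith
  exact pos_of_mul_pos_left h3 hε.le

lemma orb_right_of_fix {g : PermR} (hg : IsPL g) {p : ℝ} (hp : ap g p = p)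
    (hn : ¬ ∃ e > p, ∀ y ∈ Ioo p e, ap g y = y) : ∃ q, IsOrbital g p q := by
  obtain ⟨m, hm, e, he, hge⟩ := hg.rgerm hp
  have hm1 : m ≠ 1 := by
    rintro rfl
    exact hn ⟨e, he, fun y hy => by rw [hge y hy]; ring⟩
  have hmov : ∀ y ∈ Ioo p e, ap g y ≠ y := by
    intro y hy h
    rw [hge y hy] at h
    have : (m - 1) * (y - p) = 0 := by linarith
    rcases mul_eq_zero.1 this with h | h
    · exact hm1 (by linarith)
    · linarith [hy.1]
  obtain ⟨y, hy⟩ := nonempty_Ioo.2 he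
  obtain ⟨u, v, ho, hu, hv⟩ := hg.orbital (hmov y hy)
  have h1 : p ≤ u := by
    by_contra h
    exact ho.mov (not_le.1 h) (hy.1.trans hv) hp
  rcases h1.eq_or_lt with h | h
  · subst h; exact ⟨v, ho⟩
  · exact absurd ho.left (hmov u ⟨h, hu.trans hy.2⟩)

lemma orb_left_of_fix {g : PermR} (hg : IsPL g) {p : ℝ} (hp : ap g p = p)
    (hn : ¬ ∃ e < p, ∀ y ∈ Ioo e p, ap g y = y) : ∃ q, IsOrbital g q p := by
  obtain ⟨m, hm, e, he, hge⟩ := hg.lgerm hp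
  have hm1 : m ≠ 1 := by
    rintro rfl
    exact hn ⟨e, he, fun y hy => by rw [hge y hy]; ring⟩
  have hmov : ∀ y ∈ Ioo e p, ap g y ≠ y := by
    intro y hy h
    rw [hge y hy] at h
    have : (m - 1) * (y - p) = 0 := by linarith
    rcases mul_eq_zero.1 this with h | h
    · exact hm1 (by linarith)
    · linarith [hy.2]
  obtain ⟨y, hy⟩ := nonempty_Ioo.2 he
  obtain ⟨u, v, ho, hu, hv⟩ := hg.orbital (hmov y hy)
  have h1 : v ≤ p := by
    by_contra h
    exact ho.mov (hu.trans hy.2) (not_le.1 h) hp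
  rcases h1.eq_or_lt with h | h
  · subst h; exact ⟨u, ho⟩
  · exact absurd ho.right (hmov v ⟨hy.1.trans hv, h⟩)

lemma ap_comm_iff (g h : PermR) (x : ℝ) :
    ap (g * h * g⁻¹ * h⁻¹) x = x ↔ ap h (ap g x) = ap g (ap h x) := by
  simp only [ap_mul]
  constructor
  · intro H
    have := congrArg (fun t => ap g (ap h t)) H
    simpa only [ap_ap_inv] using this
  · intro H
    rw [H, ap_inv_ap, ap_inv_ap]

lemma comm_rgerm {g h : PermR} (hg : IsPL g) (hh : IsPL h) {a : ℝ} (ga : ap g a = a)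
    (ha : ap h a = a) : ∃ e > a, ∀ y ∈ Ioo a e, ap (g * h * g⁻¹ * h⁻¹) y = y := by
  obtain ⟨m, hm, e, he, hge⟩ := hg.rgerm ga
  obtain ⟨m', hm', e', he', hhe⟩ := hh.rgerm ha
  refine ⟨min (min e e') (min (a + (e' - a) / m) (a + (e - a) / m')), ?_, ?_⟩
  · have h1 : 0 < (e' - a) / m := div_pos (by linarith) hm
    have h2 : 0 < (e - a) / m' := div_pos (by linarith) hm'
    simp only [gt_iff_lt, lt_min_iff]
    exact ⟨⟨he, he'⟩, by linarith, by linarith⟩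
  · intro y hy
    obtain ⟨hy1, hy2⟩ := hy
    simp only [lt_min_iff] at hy2
    obtain ⟨⟨k1, k2⟩, k3, k4⟩ := hy2
    have k3' : m * (y - a) < e' - a := by
      have : y - a < (e' - a) / m := by linarith
      rw [lt_div_iff₀ hm] at this
      linarith
    have k4' : m' * (y - a) < e - a := by
      have : y - a < (e - a) / m' := by linarith
      rw [lt_div_iff₀ hm'] at this
      linarith
    have p1 : 0 < m * (y - a) := mul_pos hm (by linarith)
    have p2 : 0 < m' * (y - a) := mul_pos hm' (by linarith)
    rw [ap_comm_iff, hge y ⟨hy1, k1⟩, hhe y ⟨hy1, k2⟩, hhe _ ⟨by linarith, by linarith⟩,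
      hge _ ⟨by linarith, by linarith⟩]
    ring

lemma comm_lgerm {g h : PermR} (hg : IsPL g) (hh : IsPL h) {a : ℝ} (ga : ap g a = a)
    (ha : ap h a = a) : ∃ e < a, ∀ y ∈ Ioo e a, ap (g * h * g⁻¹ * h⁻¹) y = y := by
  obtain ⟨m, hm, e, he, hge⟩ := hg.lgerm ga
  obtain ⟨m', hm', e', he', hhe⟩ := hh.lgerm ha
  refine ⟨max (max e e') (max (a - (a - e') / m) (a - (a - e) / m')), ?_, ?_⟩
  · have h1 : 0 < (a - e') / m := div_pos (by linarith) hm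
    have h2 : 0 < (a - e) / m' := div_pos (by linarith) hm'
    simp only [max_lt_iff]
    exact ⟨⟨he, he'⟩, by linarith, by linarith⟩
  · intro y hy
    obtain ⟨hy2, hy1⟩ := hy
    simp only [max_lt_iff] at hy2
    obtain ⟨⟨k1, k2⟩, k3, k4⟩ := hy2
    have k3' : m * (a - y) < a - e' := by
      have : a - y < (a - e') / m := by linarith
      rw [lt_div_iff₀ hm] at this
      linarith
    have k4' : m' * (a - y) < a - e := by
      have : a - y < (a - e) / m' := by linarith
      rw [lt_div_iff₀ hm'] at this
      linarith
    have p1 : 0 < m * (a - y) := mul_pos hm (by linarith)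
    have p2 : 0 < m' * (a - y) := mul_pos hm' (by linarith)
    rw [ap_comm_iff, hge y ⟨k1, hy1⟩, hhe y ⟨k2, hy1⟩, hhe _ ⟨by linarith, by linarith⟩,
      hge _ ⟨by linarith, by linarith⟩]
    ring

lemma comm_mem {G : Subgroup PermR} {g h : PermR} (hg : g ∈ G) (hh : h ∈ G) : (g * h * g⁻¹ * h⁻¹) ∈ G := by
  exact G.mul_mem (G.mul_mem (G.mul_mem hg hh) (G.inv_mem hg)) (G.inv_mem hh)

lemma no_left_aux2 {G : Subgroup PermR} (hPL : ∀ g ∈ G, IsPL g)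
    (hc : ¬ AdmitsTransitionChain G) {h h' : PermR} (hh : h ∈ G) (hh' : h' ∈ G) {a c d : ℝ}
    (oh : IsOrbital h a c) (oh' : IsOrbital h' a d) (h1 : ap h' c < c) (hcd : c < d) :
    False := by
  have hac := oh.1
  have hk : ap (h * h' * h⁻¹ * h'⁻¹) c ≠ c := by
    rw [Ne, ap_comm_iff, oh.right]
    intro H
    refine oh.mov ?_ h1 H.symm
    have := (hPL h' hh').1 hac
    rwa [oh'.left] at this
  obtain ⟨e, he, hev⟩ := comm_rgerm (hPL h hh) (hPL h' hh') oh.left oh'.left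
  obtain ⟨u, v, ok, hu, hv⟩ := (hPL _ (comm_mem hh hh')).orbital hk
  refine hc ⟨h, hh, _, comm_mem hh hh', a, c, u, v, oh, ok, ?_, hu, hv⟩
  by_contra hua
  obtain ⟨y, hy1, hy2⟩ := exists_between (lt_min he hac)
  rw [lt_min_iff] at hy2
  exact ok.mov (by linarith) (hy2.2.trans hv) (hev y ⟨hy1, hy2.1⟩)

lemma no_left_aux {G : Subgroup PermR} (hPL : ∀ g ∈ G, IsPL g)
    (hc : ¬ AdmitsTransitionChain G) {g h : PermR} (hg : g ∈ G) (hh : h ∈ G) {a b c : ℝ}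
    (og : IsOrbital g a b) (oh : IsOrbital h a c) (h1 : c < ap g c) : False := by
  have oh' := oh.conj (hPL g hg).1
  rw [og.left] at oh'
  have hm : g⁻¹ * h * g ∈ G := G.mul_mem (G.mul_mem (G.inv_mem hg) hh) hg
  rcases lt_or_gt_of_ne (oh'.mov oh.1 h1) with h2 | h2
  · exact no_left_aux2 hPL hc hh hm oh oh' h2 h1
  · have h3 := (hPL _ (G.inv_mem hm)).1 h2
    rw [ap_inv_ap] at h3
    exact no_left_aux2 hPL hc hh (G.inv_mem hm) oh oh'.inv h3 h1

lemma no_left {G : Subgroup PermR} (hPL : ∀ g ∈ G, IsPL g)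
    (hc : ¬ AdmitsTransitionChain G) {g h : PermR} (hg : g ∈ G) (hh : h ∈ G) {a b c : ℝ}
    (og : IsOrbital g a b) (oh : IsOrbital h a c) (hcb : c < b) : False := by
  rcases lt_or_gt_of_ne (og.mov oh.1 hcb) with h2 | h2
  · have h3 := (hPL _ (G.inv_mem hg)).1 h2
    rw [ap_inv_ap] at h3
    exact no_left_aux hPL hc (G.inv_mem hg) hh og.inv oh h3
  · exact no_left_aux hPL hc hg hh og oh h2

lemma no_right_aux2 {G : Subgroup PermR} (hPL : ∀ g ∈ G, IsPL g)
    (hc : ¬ AdmitsTransitionChain G) {h h' : PermR} (hh : h ∈ G) (hh' : h' ∈ G) {b c d : ℝ}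
    (oh : IsOrbital h c b) (oh' : IsOrbital h' d b) (h1 : c < ap h' c) (hcd : d < c) :
    False := by
  have hac := oh.1
  have hk : ap (h * h' * h⁻¹ * h'⁻¹) c ≠ c := by
    rw [Ne, ap_comm_iff, oh.left]
    intro H
    refine oh.mov h1 ?_ H.symm
    have := (hPL h' hh').1 hac
    rwa [oh'.right] at this
  obtain ⟨e, he, hev⟩ := comm_lgerm (hPL h hh) (hPL h' hh') oh.right oh'.right
  obtain ⟨u, v, ok, hu, hv⟩ := (hPL _ (comm_mem hh hh')).orbital hk
  refine hc ⟨_, comm_mem hh hh', h, hh, u, v, c, b, ok, oh, hu, hv, ?_⟩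
  by_contra hua
  obtain ⟨y, hy2, hy1⟩ := exists_between (max_lt he hac)
  rw [max_lt_iff] at hy2
  exact ok.mov (hu.trans hy2.2) (by linarith) (hev y ⟨hy2.1, hy1⟩)

lemma no_right_aux {G : Subgroup PermR} (hPL : ∀ g ∈ G, IsPL g)
    (hc : ¬ AdmitsTransitionChain G) {g h : PermR} (hg : g ∈ G) (hh : h ∈ G) {a b c : ℝ}
    (og : IsOrbital g a b) (oh : IsOrbital h c b) (h1 : ap g c < c) : False := by
  have oh' := oh.conj (hPL g hg).1
  rw [og.right] at oh'
  have hm : g⁻¹ * h * g ∈ G := G.mul_mem (G.mul_mem (G.inv_mem hg) hh) hg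
  rcases lt_or_gt_of_ne (oh'.mov h1 oh.1) with h2 | h2
  · have h3 := (hPL _ (G.inv_mem hm)).1 h2
    rw [ap_inv_ap] at h3
    exact no_right_aux2 hPL hc hh (G.inv_mem hm) oh oh'.inv h3 h1
  · exact no_right_aux2 hPL hc hh hm oh oh' h2 h1

lemma no_right {G : Subgroup PermR} (hPL : ∀ g ∈ G, IsPL g)
    (hc : ¬ AdmitsTransitionChain G) {g h : PermR} (hg : g ∈ G) (hh : h ∈ G) {a b c : ℝ}
    (og : IsOrbital g a b) (oh : IsOrbital h c b) (hac : a < c) : False := by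
  rcases lt_or_gt_of_ne (og.mov hac oh.1) with h2 | h2
  · exact no_right_aux hPL hc hg hh og oh h2
  · have h3 := (hPL _ (G.inv_mem hg)).1 h2
    rw [ap_inv_ap] at h3
    exact no_right_aux hPL hc (G.inv_mem hg) hh og.inv oh h3

/-- intersecting orbitals are equal or strictly nested -/
lemma nested {G : Subgroup PermR} (hPL : ∀ g ∈ G, IsPL g)
    (hc : ¬ AdmitsTransitionChain G) {f g : PermR} (hf : f ∈ G) (hg : g ∈ G) {a b c d : ℝ}
    (of : IsOrbital f a b) (og : IsOrbital g c d) (h1 : a < d) (h2 : c < b) :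
    (a = c ∧ b = d) ∨ (a < c ∧ d < b) ∨ (c < a ∧ b < d) := by
  rcases lt_trichotomy a c with h | h | h <;> rcases lt_trichotomy b d with k | k | k
  · exact (hc ⟨f, hf, g, hg, a, b, c, d, of, og, h, h2, k⟩).elim
  · subst k; exact (no_right hPL hc hf hg of og h).elim
  · exact Or.inr (Or.inl ⟨h, k⟩)
  · subst h; exact (no_left hPL hc hg hf og of k).elim
  · exact Or.inl ⟨h, k⟩
  · subst h; exact (no_left hPL hc hf hg of og k).elim
  · exact Or.inr (Or.inr ⟨h, k⟩)
  · subst k; exact (no_right hPL hc hg hf og of h).elim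
  · exact (hc ⟨g, hg, f, hf, c, d, a, b, og, of, h, h1, k⟩).elim

/-- an orbital is not mapped strictly inside itself -/
lemma no_shrink {G : Subgroup PermR} (hPL : ∀ g ∈ G, IsPL g)
    (hc : ¬ AdmitsTransitionChain G) {f h : PermR} (hf : f ∈ G) (hh : h ∈ G) {a b : ℝ} (of : IsOrbital f a b)
    (h1 : a < ap h a) (h2 : ap h b < b) : False := by
  have hcont : ContinuousOn (fun x => ap h x - x) (Icc a b) :=
    ((hPL h hh).cont.sub continuous_id).continuousOn
  have := intermediate_value_Icc' of.1.le hcont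
  obtain ⟨z, hz, hz0⟩ := this (show (0:ℝ) ∈ _ from ⟨by linarith, by linarith⟩)
  have hz1 : ap h z = z := by simp only at hz0; linarith
  have hzb : z < b := by
    refine lt_of_le_of_ne hz.2 ?_
    rintro rfl
    linarith
  obtain ⟨u, v, ok, hu, hv⟩ := (hPL h hh).orbital h1.ne'
  have hvz : v ≤ z := by
    by_contra hvz
    exact ok.mov (lt_of_lt_of_le hu hz.1) (not_le.1 hvz) hz1
  exact hc ⟨h, hh, f, hf, u, v, a, b, ok, of, hu, hv, by linarith⟩

lemma key_break {G : Subgroup PermR} (hPL : ∀ g ∈ G, IsPL g)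
    (hc : ¬ AdmitsTransitionChain G) {f g : PermR} (hf : f ∈ G) (hg : g ∈ G) {a b l r : ℝ}
    (of : IsOrbital f a b) (og : IsOrbital g l r) (hla : l < a) (hbr : b < r) :
    ∃ c ∈ Breakpoints f, c ∈ Ioo l r ∧ ∀ h ∈ G, ap h c ∉ Ioo a b := by
  have hab := of.1
  have fPL := hPL f hf
  have fl : ap f l = l := by
    by_contra hfl
    obtain ⟨u, v, ok, hu, hv⟩ := fPL.orbital hfl
    have hva : v ≤ a := by
      by_contra h
      exact ok.mov (hu.trans hla) (not_le.1 h) of.left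
    exact hc ⟨f, hf, g, hg, u, v, l, r, ok, og, hu, hv, by linarith⟩
  have fl2 : ∃ e > l, ∀ y ∈ Ioo l e, ap f y = y := by
    by_contra h
    obtain ⟨q, oq⟩ := orb_right_of_fix fPL fl h
    have hqa : q ≤ a := by
      by_contra h
      exact oq.mov hla (not_le.1 h) of.left
    exact no_left hPL hc hg hf og oq (by linarith)
  obtain ⟨e, hel, hev⟩ := fl2
  have mkU : ∀ s t x : ℝ, (∀ y ∈ Ioo s t, ap f y = y) → x ∈ Ioo s t →
      ∀ᶠ y in nhds x, ap f y = y := by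
    intro s t x h hx
    filter_upwards [isOpen_Ioo.mem_nhds hx] with y hy using h y hy
  set U : Set ℝ := {x | (l < x ∧ x < a) ∧ ∀ᶠ y in nhds x, ap f y = y} with hU
  have hUne : U.Nonempty := by
    obtain ⟨y, hy1, hy2⟩ := exists_between (lt_min hel hla)
    rw [lt_min_iff] at hy2
    exact ⟨y, ⟨hy1, hy2.2⟩, mkU l e y hev ⟨hy1, hy2.1⟩⟩
  have hUb : BddAbove U := ⟨a, fun x hx => hx.1.2.le⟩
  set c := sSup U with hcdef
  have hlc : l < c := by
    obtain ⟨y, hy⟩ := hUne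
    exact lt_of_lt_of_le hy.1.1 (le_csSup hUb hy)
  have hca : c ≤ a := csSup_le hUne (fun x hx => hx.1.2.le)
  have hcl : c ∈ closure U := csSup_mem_closure hUne hUb
  have fc : ap f c = c := by
    have hF : IsClosed {y | ap f y = y} := isClosed_eq fPL.cont continuous_id
    have : U ⊆ {y | ap f y = y} := fun x hx => hx.2.self_of_nhds
    exact closure_minimal this hF hcl
  have noU : ∀ s t : ℝ, s < t → c ≤ s → t ≤ a → ¬ ∀ y ∈ Ioo s t, ap f y = y := by
    intro s t hst hcs hta h
    obtain ⟨y, hy⟩ := nonempty_Ioo.2 hst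
    have : y ∈ U := ⟨⟨by linarith [hy.1], by linarith [hy.2]⟩, mkU s t y h hy⟩
    have := le_csSup hUb this
    linarith [hy.1]
  have cnot : ¬ ∀ᶠ y in nhds c, ap f y = y := by
    intro h
    obtain ⟨ε, hε, hball⟩ := Metric.eventually_nhds_iff.1 h
    have hb : ∀ y ∈ Ioo c (c + ε), ap f y = y := by
      intro y hy
      apply hball
      rw [Real.dist_eq, abs_lt]
      constructor <;> linarith [hy.1, hy.2]
    rcases hca.eq_or_lt with h1 | h1
    · obtain ⟨y, hy1, hy2⟩ := exists_between (lt_min hab (show a < c + ε by linarith))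
      rw [lt_min_iff] at hy2
      exact of.mov hy1 hy2.1 (hb y ⟨by linarith, hy2.2⟩)
    · refine noU c (min a (c + ε)) (lt_min h1 (by linarith)) le_rfl (min_le_left _ _) ?_
      intro y hy
      exact hb y ⟨hy.1, lt_of_lt_of_le hy.2 (min_le_right _ _)⟩
  have caff : ¬ IsLocallyAffineAt f c := by
    rintro ⟨m, k, hmk⟩
    have h2 := eventually_eventually_nhds.2 hmk
    obtain ⟨x, hx1, hx2⟩ := mem_closure_iff_nhds.1 hcl _ h2
    have h3 : ∀ᶠ y in nhds x, y = m * y + k := by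
      filter_upwards [hx1, hx2.2] with y hy1 hy2
      rw [← hy1, hy2]
    obtain ⟨ε, hε, hball⟩ := Metric.eventually_nhds_iff.1 h3
    have e1 := @hball x (by simpa using hε)
    have e2 := @hball (x + ε / 2) (by
      rw [Real.dist_eq, abs_lt]; constructor <;> linarith)
    have e3 : (m - 1) * ε = 0 := by linarith
    have hm : m = 1 := by
      rcases mul_eq_zero.1 e3 with h | h
      · linarith
      · linarith
    subst hm
    have hk : k = 0 := by linarith
    subst hk
    apply cnot
    filter_upwards [hmk] with y hy
    rw [hy]; ring
  have hcr : c < r := by linarith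
  refine ⟨c, ⟨(hPL g hg).mem_Ioo (og.mov hlc hcr), caff⟩, ⟨hlc, hcr⟩, ?_⟩
  intro h hh hmem
  have hi := G.inv_mem hh
  have iPL := hPL _ hi
  have of' := of.conj iPL.1
  have hf' : h⁻¹⁻¹ * f * h⁻¹ ∈ G := G.mul_mem (G.mul_mem (G.inv_mem hi) hf) hi
  have m1 := iPL.1 hmem.1
  have m2 := iPL.1 hmem.2
  rw [ap_inv_ap] at m1 m2
  have ea : ap h (ap h⁻¹ a) = a := ap_ap_inv h a
  have eb : ap h (ap h⁻¹ b) = b := ap_ap_inv h b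
  set a' := ap h⁻¹ a
  set b' := ap h⁻¹ b
  rcases lt_or_ge a b' with hlt | hge
  · rcases nested hPL hc hf hf' of of' hlt (by linarith) with h1 | h1 | h1
    · linarith [h1.1]
    · linarith [h1.1]
    · exact no_shrink hPL hc hf' hh of' (by linarith) (by linarith)
  · by_cases hfb : ap f b' = b'
    · have hn : ¬ ∃ e < b', ∀ y ∈ Ioo e b', ap f y = y := by
        rintro ⟨e, he, h3⟩
        refine noU (max c e) b' (max_lt m2 he) (le_max_left _ _) hge ?_
        intro y hy
        exact h3 y ⟨lt_of_le_of_lt (le_max_right _ _) hy.1, hy.2⟩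
      obtain ⟨q, oq⟩ := orb_left_of_fix fPL hfb hn
      have hqc : c ≤ q := by
        by_contra h4
        exact oq.mov (not_le.1 h4) m2 fc
      exact no_right hPL hc hf' hf of' oq (by linarith)
    · obtain ⟨u, v, ok, hu, hv⟩ := fPL.orbital hfb
      have huc : c ≤ u := by
        by_contra h4
        exact ok.mov (not_le.1 h4) (m2.trans hv) fc
      exact hc ⟨_, hf', f, hf, a', b', u, v, of', ok, by linarith, hu, hv⟩

lemma exists_break {f : PermR} (hf : IsPL f) {a b : ℝ} (of : IsOrbital f a b) :
    ∃ c ∈ Breakpoints f, c ∈ Ioo a b := by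
  by_contra hno
  push Not at hno
  have hloc : ∀ x ∈ Ioo a b, IsLocallyAffineAt f x := by
    intro x hx
    by_contra h
    exact hno x ⟨hf.mem_Ioo (of.mov hx.1 hx.2), h⟩ hx
  obtain ⟨m, k, hmk⟩ := affine_of_local hloc
  have hcl : Icc a b ⊆ {x | ap f x = m * x + k} := by
    rw [← closure_Ioo of.1.ne]
    exact closure_minimal hmk (isClosed_eq hf.cont (by fun_prop))
  have e1 : ap f a = m * a + k := hcl ⟨le_rfl, of.1.le⟩
  have e2 : ap f b = m * b + k := hcl ⟨of.1.le, le_rfl⟩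
  rw [of.left] at e1
  rw [of.right] at e2
  have e3 : (m - 1) * (b - a) = 0 := by linarith
  have hm : m = 1 := by
    rcases mul_eq_zero.1 e3 with h | h
    · linarith
    · linarith [of.1]
  subst hm
  obtain ⟨x, hx⟩ := nonempty_Ioo.2 of.1
  apply of.mov hx.1 hx.2
  rw [hmk x hx]
  linarith

/-- The breakpoint orbits meeting `(a,b)`. -/
def SO (G : Subgroup PermR) (a b : ℝ) : Set (Set ℝ) :=
  {O ∈ (orbitOf G) '' BreakSet (G : Set PermR) | (O ∩ Ioo a b).Nonempty}

lemma SO_sub (G : Subgroup PermR) (a b : ℝ) :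
    SO G a b ⊆ (orbitOf G) '' BreakSet (G : Set PermR) := fun _ h => h.1

lemma mem_orbitOf_self (G : Subgroup PermR) (x : ℝ) : x ∈ orbitOf G x := ⟨1, G.one_mem, rfl⟩

lemma mem_SO {G : Subgroup PermR} {f : PermR} (hf : f ∈ G) {a b c : ℝ} (h : c ∈ Breakpoints f)
    (h2 : c ∈ Ioo a b) : orbitOf G c ∈ SO G a b :=
  ⟨⟨c, mem_iUnion₂.2 ⟨f, hf, h⟩, rfl⟩, c, mem_orbitOf_self G c, h2⟩

lemma SO_pos {G : Subgroup PermR} (hPL : ∀ g ∈ G, IsPL g)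
    (hfin : ((orbitOf G) '' BreakSet (G : Set PermR)).Finite) {f : PermR} (hf : f ∈ G)
    {a b : ℝ} (of : IsOrbital f a b) : 0 < (SO G a b).ncard := by
  obtain ⟨c, h1, h2⟩ := exists_break (hPL f hf) of
  rw [Set.ncard_pos (hfin.subset (SO_sub G a b))]
  exact ⟨_, mem_SO hf h1 h2⟩

lemma SO_lt {G : Subgroup PermR} (hPL : ∀ g ∈ G, IsPL g) (hc : ¬ AdmitsTransitionChain G)
    (hfin : ((orbitOf G) '' BreakSet (G : Set PermR)).Finite) {f g : PermR} (hf : f ∈ G)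
    (hg : g ∈ G) {a b l r : ℝ} (of : IsOrbital f a b) (og : IsOrbital g l r) (h1 : l < a)
    (h2 : b < r) : (SO G a b).ncard < (SO G l r).ncard := by
  refine Set.ncard_lt_ncard ?_ (hfin.subset (SO_sub G l r))
  obtain ⟨c, k1, k2, k3⟩ := key_break hPL hc hf hg of og h1 h2
  refine ⟨fun O hO => ⟨hO.1, hO.2.mono (inter_subset_inter_right _
    (Ioo_subset_Ioo h1.le h2.le))⟩, fun hsub => ?_⟩
  obtain ⟨_, y, ⟨h, hh, hy⟩, hy2⟩ := hsub (mem_SO hf k1 k2)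
  rw [← hy] at hy2
  exact k3 h hh hy2

lemma SO_le {G : Subgroup PermR}
    (hfin : ((orbitOf G) '' BreakSet (G : Set PermR)).Finite) (a b : ℝ) :
    (SO G a b).ncard ≤ ((orbitOf G) '' BreakSet (G : Set PermR)).ncard :=
  Set.ncard_le_ncard (SO_sub G a b) hfin

lemma tower_bound {G : Subgroup PermR} (hPL : ∀ g ∈ G, IsPL g) (hc : ¬ AdmitsTransitionChain G)
    (hfin : ((orbitOf G) '' BreakSet (G : Set PermR)).Finite) {T : Set ((ℝ × ℝ) × PermR)}
    (hT : AdmitsTower G T) :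
    T.ncard ≤ ((orbitOf G) '' BreakSet (G : Set PermR)).ncard := by
  set N := ((orbitOf G) '' BreakSet (G : Set PermR)).ncard with hN
  obtain ⟨⟨t1, t2, t3⟩, t4⟩ := hT
  have hinj : InjOn (fun p : (ℝ × ℝ) × PermR => (SO G p.1.1 p.1.2).ncard) T := by
    intro p hp q hq hpq
    have op := t1 p hp
    have oq := t1 q hq
    simp only at hpq
    have hint : p.1.1 < q.1.2 ∧ q.1.1 < p.1.2 := by
      have l1 := op.1
      have l2 := oq.1
      rcases t2 p hp q hq with h | h
      · rw [Ioo_subset_Ioo_iff l1] at h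
        exact ⟨by linarith [h.2], by linarith [h.1]⟩
      · rw [Ioo_subset_Ioo_iff l2] at h
        exact ⟨by linarith [h.1], by linarith [h.2]⟩
    rcases nested hPL hc (t4 p hp) (t4 q hq) op oq hint.1 hint.2 with h | h | h
    · have h1 : p.1 = q.1 := Prod.ext h.1 h.2
      exact Prod.ext h1 (t3 p hp q hq h1)
    · have := SO_lt hPL hc hfin (t4 q hq) (t4 p hp) oq op h.1 h.2
      omega
    · have := SO_lt hPL hc hfin (t4 p hp) (t4 q hq) op oq h.1 h.2
      omega
  have hmaps : ∀ p ∈ T, (SO G p.1.1 p.1.2).ncard ∈ Icc 1 N := fun p hp =>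
    ⟨SO_pos hPL hfin (t4 p hp) (t1 p hp), SO_le hfin _ _⟩
  have := Set.ncard_le_ncard_of_injOn _ hmaps hinj (Set.finite_Icc 1 N)
  rw [Set.ncard_eq_toFinset_card' (Icc 1 N)] at this
  simpa using this

/-- Elements of `G` trivial on a right neighbourhood of `a`. -/
def germKer (G : Subgroup PermR) (a : ℝ) : Subgroup G where
  carrier := {x | ∃ e > a, ∀ y ∈ Ioo a e, ap x.1 y = y}
  one_mem' := ⟨a + 1, by simp, fun y _ => rfl⟩
  mul_mem' := by
    rintro x y ⟨e, he, h⟩ ⟨e', he', h'⟩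
    refine ⟨min e e', lt_min he he', fun z hz => ?_⟩
    have h1 := h z ⟨hz.1, lt_of_lt_of_le hz.2 (min_le_left _ _)⟩
    have h2 := h' z ⟨hz.1, lt_of_lt_of_le hz.2 (min_le_right _ _)⟩
    change ap (x.1 * y.1) z = z
    rw [ap_mul, h1, h2]
  inv_mem' := by
    rintro x ⟨e, he, h⟩
    refine ⟨e, he, fun z hz => ?_⟩
    have h1 := ap_inv_ap x.1 z
    rw [h z hz] at h1
    exact h1

lemma derived_bound {G : Subgroup PermR} (hPL : ∀ g ∈ G, IsPL g)
    (hc : ¬ AdmitsTransitionChain G)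
    (hfin : ((orbitOf G) '' BreakSet (G : Set PermR)).Finite) (k : ℕ) :
    ∀ x ∈ derivedSeries G k, ∀ a b, IsOrbital x.1 a b →
      (SO G a b).ncard + k ≤ ((orbitOf G) '' BreakSet (G : Set PermR)).ncard := by
  induction k with
  | zero => intro x _ a b _; simpa using SO_le hfin a b
  | succ k ih =>
    intro x hx a b ox
    have hx' : x ∈ derivedSeries G k := derivedSeries_antitone G (Nat.le_succ k) hx
    have h1 := ih x hx' a b ox
    by_contra hlt
    have hfix : ∀ h ∈ derivedSeries G k, ap h.1 a = a := by
      intro h hh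
      by_contra hne
      obtain ⟨u, v, ok, hu, hv⟩ := (hPL h.1 h.2).orbital hne
      have hab := ox.1
      rcases nested hPL hc x.2 h.2 ox ok hv (by linarith) with h2 | h2 | h2
      · linarith [h2.1]
      · linarith [h2.1]
      · have := SO_lt hPL hc hfin x.2 h.2 ox ok h2.1 h2.2
        have := ih h hh u v ok
        omega
    have hle : derivedSeries G (k + 1) ≤ germKer G a := by
      rw [derivedSeries_succ, Subgroup.commutator_le]
      intro g hg h hh
      exact comm_rgerm (hPL g.1 g.2) (hPL h.1 h.2) (hfix g hg) (hfix h hh)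
    obtain ⟨e, he, hev⟩ := hle hx
    obtain ⟨y, hy1, hy2⟩ := exists_between (lt_min he ox.1)
    rw [lt_min_iff] at hy2
    exact ox.mov hy1 hy2.2 (hev y ⟨hy1, hy2.1⟩)

theorem statement18 (G : Subgroup PermR) (hPL : ∀ g ∈ G, IsPL g)
    (hchainless : ¬ AdmitsTransitionChain G)
    (horbfin : ((orbitOf G) '' BreakSet (G : Set PermR)).Finite)
    (n : ℕ) (hn : n = ((orbitOf G) '' BreakSet (G : Set PermR)).ncard + 1) :
    (¬ ∃ T : Set ((ℝ × ℝ) × PermR), AdmitsTower G T ∧ T.ncard = n) ∧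
    IsSolvable ↥G ∧ derivedLength ↥G ≤ n - 1 := by
  set N := ((orbitOf G) '' BreakSet (G : Set PermR)).ncard with hN
  have hder : derivedSeries G N = ⊥ := by
    rw [eq_bot_iff]
    intro x hx
    rw [Subgroup.mem_bot]
    apply Subtype.ext
    apply ap_ext
    intro y
    by_contra hy
    obtain ⟨a, b, ox, _, _⟩ := (hPL x.1 x.2).orbital hy
    have h1 := derived_bound hPL hchainless horbfin N x hx a b ox
    have h2 := SO_pos hPL horbfin x.2 ox
    omega
  refine ⟨?_, ⟨⟨N, hder⟩⟩, ?_⟩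
  · rintro ⟨T, hT, hTn⟩
    have := tower_bound hPL hchainless horbfin hT
    omega
  · rw [hn, Nat.add_sub_cancel]
    exact Nat.sInf_le hder

end PLPaper
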